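/- Telescoped convergence bound (Eq. 20): Suppose π* is a policy maximizing J, i.e. J(π*) ≥ J(π) for every policy π. Then for every integer M ≥ 1, (1/M) ∑_{m=0}^{M−1} ( J(π*) − ∑_{s : p(s)>0} p(s) B_{priorᵐ, πᵐ⁺¹}V(s) ) ≤ (1/(M·β)) ∑_{s : p(s)>0} p(s) ∑_{a∈A} π*(a|s) log( π^M(a|s) / π⁰(a|s) ). -/

import Mathlib

open Finset

/-- A probability distribution on a finite type: nonnegative and sums to one. -/
def IsDist {X : Type*} [Fintype X] (d : X → ℝ) : Prop :=
  (∀ x, 0 ≤ d x) ∧ ∑ x, d x = 1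

/-- Kullback–Leibler divergence: sum over points where `μ` is positive. -/
noncomputable def KL {X : Type*} [Fintype X] (μ ν : X → ℝ) : ℝ :=
  ∑ x, if 0 < μ x then μ x * Real.log (μ x / ν x) else 0

/-- Marginal action distribution of policy `π` under state distribution `p`. -/
noncomputable def margPol {S A : Type*} [Fintype S] [Fintype A]
    (p : S → ℝ) (π : S → A → ℝ) (a : A) : ℝ :=
  ∑ s, p s * π s a

/-- Evaluation operator `B_{q,π} V (s)` (with `F s a = R s a + γ 𝔼[V]` precomputed). -/
noncomputable def Beval {S A : Type*} [Fintype S] [Fintype A]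
    (F : S → A → ℝ) (β : ℝ) (q : A → ℝ) (π : S → A → ℝ) (s : S) : ℝ :=
  ∑ a, if 0 < π s a then π s a * (F s a - (1 / β) * Real.log (π s a / q a)) else 0

/-- Mutual-information-regularized objective `J(π)`. -/
noncomputable def Jobj {S A : Type*} [Fintype S] [Fintype A]
    (p : S → ℝ) (F : S → A → ℝ) (β : ℝ) (π : S → A → ℝ) : ℝ :=
  ∑ s, if 0 < p s then
    p s * ∑ a, (if 0 < π s a then
      π s a * (F s a - (1 / β) * Real.log (π s a / margPol p π a)) else 0)
  else 0

/-- Blahut–Arimoto policy iterates. -/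
noncomputable def BApol {S A : Type*} [Fintype S] [Fintype A]
    (p : S → ℝ) (F : S → A → ℝ) (β : ℝ) (π0 : S → A → ℝ) : ℕ → S → A → ℝ
  | 0 => π0
  | m + 1 => fun s a =>
      ((∑ s', p s' * BApol p F β π0 m s' a) * Real.exp (β * F s a)) /
        ∑ a', (∑ s', p s' * BApol p F β π0 m s' a') * Real.exp (β * F s a')

/-- Blahut–Arimoto prior iterates: the marginal of the `m`-th policy under `p`. -/
noncomputable def BAprior {S A : Type*} [Fintype S] [Fintype A]
    (p : S → ℝ) (F : S → A → ℝ) (β : ℝ) (π0 : S → A → ℝ) (m : ℕ) (a : A) : ℝ :=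
  ∑ s, p s * BApol p F β π0 m s a

/-!
For a prior `q`, let `π_q(a|s) ∝ q(a) exp (β F(s,a))` with normalizer `Z_q(s)`. The Gibbs
variational identity `B_{q,ρ} V(s) = (log Z_q(s) - KL(ρ(·|s) ‖ π_q(·|s))) / β`, together with the
cost `KL(m_ρ ‖ q) / β` of replacing the optimal prior `m_ρ` by `q` in `J(ρ)`, gives
`J(ρ) - ∑ p B_{q,π_q} V = (KL(m_ρ ‖ q) - ∑ p KL(ρ ‖ π_q)) / β` for every policy `ρ`.
When `q` is the marginal of `π`, joint convexity of the divergence (the log-sum inequality) bounds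
`KL(m_ρ ‖ m_π)` by `∑ p KL(ρ ‖ π)`. The gap of a Blahut–Arimoto step is thus at most the decrease
of `∑ p KL(ρ ‖ πᵐ) / β`, which telescopes.
-/

theorem IsDist.nonempty {X : Type*} [Fintype X] {d : X → ℝ} (hd : IsDist d) : Nonempty X := by
  by_contra h
  rw [not_nonempty_iff] at h
  exact zero_ne_one (Fintype.sum_empty d ▸ hd.2)

theorem IsDist.pos {X : Type*} [Fintype X] {d : X → ℝ} (hd : IsDist d) : 0 < d := by
  refine lt_of_le_of_ne hd.1 ?_
  rintro rfl
  simpa using hd.2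

theorem ite_pos_mul {x : ℝ} (hx : 0 ≤ x) (y : ℝ) : (if 0 < x then x * y else 0) = x * y := by
  rcases hx.eq_or_lt with rfl | hx
  · simp
  · exact if_pos hx

section Divergence

theorem sum_mul_log_sum_div_sum_le {ι : Type*} {t : Finset ι} {a b : ι → ℝ}
    (ha : ∀ i ∈ t, 0 ≤ a i) (hb : ∀ i ∈ t, 0 ≤ b i) (hab : ∀ i ∈ t, b i = 0 → a i = 0) :
    (∑ i ∈ t, a i) * Real.log ((∑ i ∈ t, a i) / ∑ i ∈ t, b i) ≤
      ∑ i ∈ t, a i * Real.log (a i / b i) := by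
  have mul_ratio : ∀ i ∈ t, b i * (a i / b i) = a i := fun i hi ↦
    mul_div_cancel_of_imp' (hab i hi)
  rcases (sum_nonneg hb).eq_or_lt with hB | hB
  · have ha0 : ∀ i ∈ t, a i = 0 := fun i hi ↦
      hab i hi ((sum_eq_zero_iff_of_nonneg hb).1 hB.symm i hi)
    rw [sum_eq_zero ha0, zero_mul, sum_eq_zero fun i hi ↦ by rw [ha0 i hi, zero_mul]]
  · have jensen := Real.convexOn_mul_log.map_centerMass_le hb hB
      fun i hi ↦ div_nonneg (ha i hi) (hb i hi)
    have weighted_value : ∀ i ∈ t, b i * (a i / b i * Real.log (a i / b i)) =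
        a i * Real.log (a i / b i) := fun i hi ↦ by rw [← mul_assoc, mul_ratio i hi]
    simp only [centerMass, smul_eq_mul, Function.comp_apply, inv_mul_eq_div,
      sum_congr rfl mul_ratio, sum_congr rfl weighted_value] at jensen
    rwa [div_mul_eq_mul_div, div_le_div_iff_of_pos_right hB] at jensen

variable {S X : Type*} [Fintype S] [Fintype X]

theorem KL_eq_sum {μ : X → ℝ} (hμ : ∀ x, 0 ≤ μ x) (ν : X → ℝ) :
    KL μ ν = ∑ x, μ x * Real.log (μ x / ν x) :=
  sum_congr rfl fun x _ ↦ ite_pos_mul (hμ x) _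

theorem KL_self (μ : X → ℝ) : KL μ μ = 0 := by
  refine sum_eq_zero fun x _ ↦ ?_
  split_ifs with hx
  · rw [div_self hx.ne', Real.log_one, mul_zero]
  · rfl

theorem KL_sub_KL {μ ν ν' : X → ℝ} (hμ : ∀ x, 0 ≤ μ x) (hν : ∀ x, 0 < ν x)
    (hν' : ∀ x, 0 < ν' x) : KL μ ν - KL μ ν' = ∑ x, μ x * Real.log (ν' x / ν x) := by
  rw [KL_eq_sum hμ, KL_eq_sum hμ, ← sum_sub_distrib]
  refine sum_congr rfl fun x _ ↦ ?_
  by_cases hx : μ x = 0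
  · simp [hx]
  · rw [Real.log_div hx (hν x).ne', Real.log_div hx (hν' x).ne',
      Real.log_div (hν' x).ne' (hν x).ne']
    ring

theorem margPol_nonneg {p : S → ℝ} {μ : S → X → ℝ} (hp : ∀ s, 0 ≤ p s)
    (hμ : ∀ s x, 0 ≤ μ s x) (x : X) : 0 ≤ margPol p μ x :=
  sum_nonneg fun s _ ↦ mul_nonneg (hp s) (hμ s x)

theorem KL_margPol_le {p : S → ℝ} {μ ν : S → X → ℝ} (hp : ∀ s, 0 ≤ p s)
    (hμ : ∀ s x, 0 ≤ μ s x) (hν : ∀ s x, 0 ≤ ν s x) (hμν : ∀ s x, ν s x = 0 → μ s x = 0) :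
    KL (margPol p μ) (margPol p ν) ≤ ∑ s, p s * KL (μ s) (ν s) := by
  have cancel_weight : ∀ s x, p s * μ s x * Real.log (p s * μ s x / (p s * ν s x)) =
      p s * (μ s x * Real.log (μ s x / ν s x)) := fun s x ↦ by
    by_cases hs : p s = 0
    · simp [hs]
    · rw [mul_div_mul_left _ _ hs, mul_assoc]
  calc KL (margPol p μ) (margPol p ν)
      = ∑ x, margPol p μ x * Real.log (margPol p μ x / margPol p ν x) :=
        KL_eq_sum (margPol_nonneg hp hμ) _
    _ ≤ ∑ x, ∑ s, p s * μ s x * Real.log (p s * μ s x / (p s * ν s x)) :=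
        sum_le_sum fun x _ ↦ sum_mul_log_sum_div_sum_le
          (fun s _ ↦ mul_nonneg (hp s) (hμ s x)) (fun s _ ↦ mul_nonneg (hp s) (hν s x))
          fun s _ h ↦ mul_eq_zero.2 ((mul_eq_zero.1 h).imp_right (hμν s x))
    _ = ∑ s, p s * KL (μ s) (ν s) := by
        simp only [cancel_weight, KL_eq_sum (hμ _), mul_sum]
        exact sum_comm

end Divergence

section Gibbs

variable {S A : Type*} [Fintype A] {F : S → A → ℝ} {β : ℝ} {q : A → ℝ} {ρ : S → A → ℝ} {s : S}

/-- The normalizer `Z_q(s)` of the Gibbs policy with prior `q`. -/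
noncomputable def gibbsPartition (F : S → A → ℝ) (β : ℝ) (q : A → ℝ) (s : S) : ℝ :=
  ∑ a, q a * Real.exp (β * F s a)

/-- The Gibbs (Boltzmann) policy `π_q` at inverse temperature `β` with prior `q`, which maximizes
`B_{q,π} V` over policies `π`; a Blahut–Arimoto step is this map applied to the current marginal. -/
noncomputable def gibbsPolicy (F : S → A → ℝ) (β : ℝ) (q : A → ℝ) (s : S) (a : A) : ℝ :=
  q a * Real.exp (β * F s a) / gibbsPartition F β q s

theorem gibbsPartition_pos [Nonempty A] (hq : ∀ a, 0 < q a) : 0 < gibbsPartition F β q s :=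
  sum_pos (fun a _ ↦ mul_pos (hq a) (Real.exp_pos _)) univ_nonempty

theorem gibbsPolicy_pos (hq : ∀ a, 0 < q a) (a : A) : 0 < gibbsPolicy F β q s a :=
  haveI : Nonempty A := ⟨a⟩
  div_pos (mul_pos (hq a) (Real.exp_pos _)) (gibbsPartition_pos hq)

theorem isDist_gibbsPolicy [Nonempty A] (hq : ∀ a, 0 < q a) : IsDist (gibbsPolicy F β q s) := by
  refine ⟨fun a ↦ (gibbsPolicy_pos hq a).le, ?_⟩
  simp only [gibbsPolicy]
  rw [← sum_div]
  exact div_self (gibbsPartition_pos hq).ne'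

theorem log_gibbsPolicy (hq : ∀ a, 0 < q a) (a : A) :
    Real.log (gibbsPolicy F β q s a) =
      Real.log (q a) + β * F s a - Real.log (gibbsPartition F β q s) := by
  have : Nonempty A := ⟨a⟩
  rw [gibbsPolicy, Real.log_div (mul_pos (hq a) (Real.exp_pos _)).ne' (gibbsPartition_pos hq).ne',
    Real.log_mul (hq a).ne' (Real.exp_ne_zero _), Real.log_exp]

variable [Fintype S]

theorem Beval_eq_sum (hρ : ∀ a, 0 ≤ ρ s a) :
    Beval F β q ρ s = ∑ a, ρ s a * (F s a - (1 / β) * Real.log (ρ s a / q a)) :=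
  sum_congr rfl fun a _ ↦ ite_pos_mul (hρ a) _

theorem Beval_eq_log_gibbsPartition_sub_KL (hβ : β ≠ 0) (hq : ∀ a, 0 < q a) (hρ : IsDist (ρ s)) :
    Beval F β q ρ s =
      (1 / β) * (Real.log (gibbsPartition F β q s) - KL (ρ s) (gibbsPolicy F β q s)) := by
  have hlog : ∑ a, ρ s a * Real.log (gibbsPartition F β q s) =
      Real.log (gibbsPartition F β q s) := by
    rw [← sum_mul, hρ.2, one_mul]
  rw [Beval_eq_sum hρ.1, KL_eq_sum hρ.1, ← hlog, ← sum_sub_distrib, mul_sum]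
  refine sum_congr rfl fun a _ ↦ ?_
  by_cases ha : ρ s a = 0
  · simp [ha]
  · rw [Real.log_div ha (hq a).ne', Real.log_div ha (gibbsPolicy_pos hq a).ne', log_gibbsPolicy hq]
    field_simp
    ring

theorem Beval_eq_Beval_gibbsPolicy_sub_KL (hβ : β ≠ 0) (hq : ∀ a, 0 < q a) (hρ : IsDist (ρ s)) :
    Beval F β q ρ s =
      Beval F β q (gibbsPolicy F β q) s - (1 / β) * KL (ρ s) (gibbsPolicy F β q s) := by
  have : Nonempty A := hρ.nonempty
  rw [Beval_eq_log_gibbsPartition_sub_KL hβ hq hρ,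
    Beval_eq_log_gibbsPartition_sub_KL hβ hq (isDist_gibbsPolicy hq), KL_self]
  ring

end Gibbs

section BlahutArimoto

variable {S A : Type*} [Fintype S] [Fintype A] {p : S → ℝ} {F : S → A → ℝ} {β : ℝ}
  {q : A → ℝ} {π π0 ρ : S → A → ℝ}

theorem margPol_pos (hp : 0 < p) (hπ : ∀ s a, 0 < π s a) (a : A) : 0 < margPol p π a := by
  obtain ⟨hp0, s, hs⟩ := Pi.lt_def.1 hp
  exact sum_pos' (fun t _ ↦ mul_nonneg (hp0 t) (hπ t a).le) ⟨s, mem_univ s, mul_pos hs (hπ s a)⟩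

theorem Jobj_eq_sum_Beval (hp : ∀ s, 0 ≤ p s) :
    Jobj p F β ρ = ∑ s, p s * Beval F β (margPol p ρ) ρ s :=
  sum_congr rfl fun s _ ↦ ite_pos_mul (hp s) _

theorem Jobj_eq_sum_Beval_add_KL (hp : ∀ s, 0 ≤ p s) (hq : ∀ a, 0 < q a)
    (hρ : ∀ s a, 0 ≤ ρ s a) :
    Jobj p F β ρ = ∑ s, p s * Beval F β q ρ s + (1 / β) * KL (margPol p ρ) q := by
  have hpρ : ∀ s a, 0 ≤ p s * ρ s a := fun s a ↦ mul_nonneg (hp s) (hρ s a)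
  have change_prior : ∀ s a,
      p s * (ρ s a * (F s a - (1 / β) * Real.log (ρ s a / margPol p ρ a))) =
        p s * (ρ s a * (F s a - (1 / β) * Real.log (ρ s a / q a))) +
          (1 / β) * (p s * ρ s a * Real.log (margPol p ρ a / q a)) := fun s a ↦ by
    rcases (hpρ s a).eq_or_lt with h | h
    · simp only [← mul_assoc, ← h, zero_mul, mul_zero, add_zero]
    · have hm : 0 < margPol p ρ a :=
        h.trans_le (single_le_sum (f := fun t ↦ p t * ρ t a) (fun t _ ↦ hpρ t a) (mem_univ s))
      have hρ0 : ρ s a ≠ 0 := right_ne_zero_of_mul h.ne'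
      rw [Real.log_div hρ0 hm.ne', Real.log_div hρ0 (hq a).ne', Real.log_div hm.ne' (hq a).ne']
      ring
  have hKL : KL (margPol p ρ) q = ∑ s, ∑ a, p s * ρ s a * Real.log (margPol p ρ a / q a) := by
    rw [KL_eq_sum (margPol_nonneg hp hρ), sum_comm]
    exact sum_congr rfl fun a _ ↦ sum_mul ..
  simp only [Jobj_eq_sum_Beval hp, Beval_eq_sum (hρ _), hKL, mul_sum, ← sum_add_distrib,
    change_prior]

theorem Jobj_sub_sum_Beval_gibbsPolicy (hp : ∀ s, 0 ≤ p s) (hβ : β ≠ 0) (hq : ∀ a, 0 < q a)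
    (hρ : ∀ s, IsDist (ρ s)) :
    Jobj p F β ρ - ∑ s, p s * Beval F β q (gibbsPolicy F β q) s =
      (1 / β) * (KL (margPol p ρ) q - ∑ s, p s * KL (ρ s) (gibbsPolicy F β q s)) := by
  rw [Jobj_eq_sum_Beval_add_KL hp hq fun s ↦ (hρ s).1]
  simp only [Beval_eq_Beval_gibbsPolicy_sub_KL hβ hq (hρ _), mul_sub, sum_sub_distrib, mul_sum,
    mul_left_comm]
  ring

theorem Jobj_sub_sum_Beval_gibbsPolicy_margPol_le (hp : 0 < p) (hβ : 0 < β)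
    (hπ : ∀ s a, 0 < π s a) (hρ : ∀ s, IsDist (ρ s)) :
    Jobj p F β ρ -
        ∑ s, p s * Beval F β (margPol p π) (gibbsPolicy F β (margPol p π)) s ≤
      (1 / β) * ∑ s, p s * (KL (ρ s) (π s) - KL (ρ s) (gibbsPolicy F β (margPol p π) s)) := by
  have hKL : KL (margPol p ρ) (margPol p π) ≤ ∑ s, p s * KL (ρ s) (π s) :=
    KL_margPol_le hp.le (fun s ↦ (hρ s).1) (fun s a ↦ (hπ s a).le)
      fun s a h ↦ absurd h (hπ s a).ne'
  rw [Jobj_sub_sum_Beval_gibbsPolicy hp.le hβ.ne' (margPol_pos hp hπ) hρ]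
  simp only [mul_sub, sum_sub_distrib]
  gcongr

theorem BAprior_eq_margPol (m : ℕ) : BAprior p F β π0 m = margPol p (BApol p F β π0 m) :=
  rfl

theorem BApol_succ (m : ℕ) :
    BApol p F β π0 (m + 1) = gibbsPolicy F β (margPol p (BApol p F β π0 m)) :=
  rfl

theorem BApol_pos (hp : 0 < p) (hπ0 : ∀ s a, 0 < π0 s a) (m : ℕ) :
    ∀ s a, 0 < BApol p F β π0 m s a := by
  induction m with
  | zero => exact hπ0
  | succ m ih => exact fun s a ↦ gibbsPolicy_pos (margPol_pos hp ih) a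

theorem blahut_arimoto_telescoped_bound_general (hp : 0 < p) (hβ : 0 < β)
    (hπ0 : ∀ s a, 0 < π0 s a) (hρ : ∀ s, IsDist (ρ s)) (M : ℕ) :
    ∑ m ∈ range M, (Jobj p F β ρ -
        ∑ s, p s * Beval F β (BAprior p F β π0 m) (BApol p F β π0 (m + 1)) s) ≤
      (1 / β) * ∑ s, p s * ∑ a, ρ s a * Real.log (BApol p F β π0 M s a / π0 s a) := by
  have hpol := BApol_pos (F := F) (β := β) hp hπ0
  calc ∑ m ∈ range M, (Jobj p F β ρ -
        ∑ s, p s * Beval F β (BAprior p F β π0 m) (BApol p F β π0 (m + 1)) s)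
      ≤ ∑ m ∈ range M, (1 / β) * ∑ s, p s *
          (KL (ρ s) (BApol p F β π0 m s) - KL (ρ s) (BApol p F β π0 (m + 1) s)) := by
        simp only [BAprior_eq_margPol, BApol_succ]
        exact sum_le_sum fun m _ ↦ Jobj_sub_sum_Beval_gibbsPolicy_margPol_le hp hβ (hpol m) hρ
    _ = (1 / β) * ∑ s, p s * (KL (ρ s) (π0 s) - KL (ρ s) (BApol p F β π0 M s)) := by
        rw [← mul_sum, sum_comm]
        simp only [← mul_sum, sum_range_sub' fun m ↦ KL (ρ _) (BApol p F β π0 m _)]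
        rfl
    _ = (1 / β) * ∑ s, p s * ∑ a, ρ s a * Real.log (BApol p F β π0 M s a / π0 s a) := by
        simp only [KL_sub_KL (hρ _).1 (hπ0 _) (hpol M _)]

end BlahutArimoto

/-- Telescoped convergence bound (Eq. 20). -/
theorem blahut_arimoto_telescoped_bound
    {S A : Type*} [Fintype S] [Fintype A] [Nonempty S] [Nonempty A]
    (p : S → ℝ) (hp : IsDist p)
    (R : S → A → ℝ) (P : S → A → S → ℝ) (hP : ∀ s a, IsDist (P s a))
    (V : S → ℝ) (β : ℝ) (hβ : 0 < β) (γ : ℝ) (hγ : 0 < γ ∧ γ < 1)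
    (F : S → A → ℝ) (hF : ∀ s a, F s a = R s a + γ * ∑ s', P s a s' * V s')
    (π0 : S → A → ℝ) (hπ0 : ∀ s, IsDist (π0 s)) (hπ0pos : ∀ s a, 0 < π0 s a)
    (πstar : S → A → ℝ) (hπstar : ∀ s, IsDist (πstar s))
    (hopt : ∀ π : S → A → ℝ, (∀ s, IsDist (π s)) → Jobj p F β π ≤ Jobj p F β πstar)
    (M : ℕ) (hM : 1 ≤ M) :
    (1 / (M : ℝ)) *
        ∑ m ∈ Finset.range M,
          (Jobj p F β πstar -
            ∑ s, if 0 < p s then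
              p s * Beval F β (BAprior p F β π0 m) (BApol p F β π0 (m + 1)) s else 0)
      ≤ (1 / ((M : ℝ) * β)) *
          ∑ s, (if 0 < p s then
            p s * ∑ a, πstar s a * Real.log (BApol p F β π0 M s a / π0 s a) else 0) := by
  simp only [ite_pos_mul (hp.1 _)]
  rw [← one_div_mul_one_div, mul_assoc]
  gcongr
  exact blahut_arimoto_telescoped_bound_general hp.pos hβ hπ0pos hπstar M
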